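/- Unique continuation for a coupled fourth-order elliptic system: Let U ⊆ ℝ³ be open and connected, and let u, v ∈ C⁴(U). Define e(w) = |∇³w|² + |∇²w|² + |∇w|² + |w|². Suppose there is a constant C > 0 such that pointwise on U one has |Δ²u| ≤ C (e(u) + e(v))^{1/2} and |Δ²v| ≤ C (e(u) + e(v))^{1/2}. If u and v both vanish identically on some nonempty open subset of U, then u = 0 and v = 0 on all of U. -/

import Mathlib

open MeasureTheory Real Set

noncomputable section

/-- `i`-th coordinate unit vector of `ℝ³`. -/
def e3 (i : Fin 3) : EuclideanSpace ℝ (Fin 3) := EuclideanSpace.single i 1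

/-- First partial derivative `∂u/∂x_i` at `x`. -/
def pd (u : EuclideanSpace ℝ (Fin 3) → ℝ) (x : EuclideanSpace ℝ (Fin 3)) (i : Fin 3) : ℝ :=
  fderiv ℝ u x (e3 i)

/-- Second partial derivative `∂²u/∂x_i ∂x_j` at `x`. -/
def pd2 (u : EuclideanSpace ℝ (Fin 3) → ℝ) (x : EuclideanSpace ℝ (Fin 3)) (i j : Fin 3) : ℝ :=
  pd (fun y => pd u y j) x i

/-- Third partial derivative `∂³u/∂x_i ∂x_j ∂x_k` at `x`. -/
def pd3 (u : EuclideanSpace ℝ (Fin 3) → ℝ) (x : EuclideanSpace ℝ (Fin 3)) (i j k : Fin 3) : ℝ :=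
  pd (fun y => pd2 u y j k) x i

/-- The Laplacian `Δu`. -/
def lap (u : EuclideanSpace ℝ (Fin 3) → ℝ) (x : EuclideanSpace ℝ (Fin 3)) : ℝ :=
  ∑ i, pd2 u x i i

/-- The bilaplacian `Δ²u = Δ(Δu)`. -/
def bilap (u : EuclideanSpace ℝ (Fin 3) → ℝ) (x : EuclideanSpace ℝ (Fin 3)) : ℝ :=
  lap (lap u) x

/-- `e(w) = |∇³w|² + |∇²w|² + |∇w|² + |w|²` (Frobenius norms of the arrays of partials). -/
def esum (u : EuclideanSpace ℝ (Fin 3) → ℝ) (x : EuclideanSpace ℝ (Fin 3)) : ℝ :=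
  (∑ i, ∑ j, ∑ k, (pd3 u x i j k) ^ 2) + (∑ i, ∑ j, (pd2 u x i j) ^ 2)
    + (∑ i, (pd u x i) ^ 2) + (u x) ^ 2


abbrev E3 := EuclideanSpace ℝ (Fin 3)

/-- partial derivative as an operator on functions -/
def dd (i : Fin 3) (f : E3 → ℝ) : E3 → ℝ := fun x => pd f x i

/-- differentiable at `x` with given partial derivative -/
def HP (f : E3 → ℝ) (x : E3) (i : Fin 3) (d : ℝ) : Prop :=
  DifferentiableAt ℝ f x ∧ pd f x i = d

lemma HP.add {f g : E3 → ℝ} {x : E3} {i : Fin 3} {a b : ℝ} (hf : HP f x i a) (hg : HP g x i b) :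
    HP (fun y => f y + g y) x i (a + b) := by
  refine ⟨hf.1.add hg.1, ?_⟩
  rw [← hf.2, ← hg.2]
  unfold pd
  rw [fderiv_fun_add hf.1 hg.1]; rfl

lemma HP.sub {f g : E3 → ℝ} {x : E3} {i : Fin 3} {a b : ℝ} (hf : HP f x i a) (hg : HP g x i b) :
    HP (fun y => f y - g y) x i (a - b) := by
  refine ⟨hf.1.sub hg.1, ?_⟩
  rw [← hf.2, ← hg.2]
  unfold pd
  rw [fderiv_fun_sub hf.1 hg.1]; rfl

lemma HP.mul {f g : E3 → ℝ} {x : E3} {i : Fin 3} {a b : ℝ} (hf : HP f x i a) (hg : HP g x i b) :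
    HP (fun y => f y * g y) x i (f x * b + g x * a) := by
  refine ⟨hf.1.mul hg.1, ?_⟩
  rw [← hf.2, ← hg.2]
  unfold pd
  rw [fderiv_fun_mul hf.1 hg.1]; simp

lemma HP.const (c : ℝ) (x : E3) (i : Fin 3) : HP (fun _ => c) x i 0 := by
  refine ⟨differentiableAt_const _, ?_⟩
  unfold pd; simp

lemma HP.exp {f : E3 → ℝ} {x : E3} {i : Fin 3} {a : ℝ} (hf : HP f x i a) :
    HP (fun y => Real.exp (f y)) x i (Real.exp (f x) * a) := by
  refine ⟨hf.1.exp, ?_⟩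
  rw [← hf.2]
  unfold pd
  rw [fderiv_exp hf.1]; simp

/-- shifted coordinate -/
def yc (q : E3) (j : Fin 3) : E3 → ℝ := fun x => x j - q j

lemma contDiff_yc (q : E3) (j : Fin 3) {n : WithTop ℕ∞} : ContDiff ℝ n (yc q j) := by
  unfold yc; fun_prop

lemma HP_yc (q : E3) (j : Fin 3) (x : E3) (i : Fin 3) :
    HP (yc q j) x i (if j = i then 1 else 0) := by
  refine ⟨(contDiff_yc q j (n := 1)).differentiable (by norm_num) x, ?_⟩
  have h : HasFDerivAt (yc q j) (EuclideanSpace.proj j : E3 →L[ℝ] ℝ) x := by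
    unfold yc
    exact (EuclideanSpace.proj (𝕜 := ℝ) j).hasFDerivAt.sub_const (q j)
  unfold pd
  rw [h.fderiv]
  simp [e3]

/-- squared distance -/
def rho (q : E3) : E3 → ℝ :=
  fun x => yc q 0 x * yc q 0 x + yc q 1 x * yc q 1 x + yc q 2 x * yc q 2 x

lemma contDiff_rho (q : E3) {n : WithTop ℕ∞} : ContDiff ℝ n (rho q) := by
  have := fun j => contDiff_yc q j (n := n)
  unfold rho
  exact (((this 0).mul (this 0)).add ((this 1).mul (this 1))).add ((this 2).mul (this 2))

lemma rho_eq (q x : E3) : rho q x = dist x q ^ 2 := by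
  rw [EuclideanSpace.dist_eq, Real.sq_sqrt (by positivity)]
  simp [Fin.sum_univ_three, rho, yc, Real.dist_eq, sq_abs]
  ring

lemma HP_rho (q : E3) (x : E3) (i : Fin 3) : HP (rho q) x i (2 * yc q i x) := by
  have h := (((HP_yc q 0 x i).mul (HP_yc q 0 x i)).add ((HP_yc q 1 x i).mul (HP_yc q 1 x i))).add
    ((HP_yc q 2 x i).mul (HP_yc q 2 x i))
  refine ⟨h.1, h.2.trans ?_⟩
  fin_cases i <;> simp <;> ring

/-- the function `s` -/
def sf (q : E3) (R : ℝ) : E3 → ℝ := fun x => R - rho q x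

lemma contDiff_sf (q : E3) (R : ℝ) {n : WithTop ℕ∞} : ContDiff ℝ n (sf q R) :=
  contDiff_const.sub (contDiff_rho q)

lemma HP_sf (q : E3) (R : ℝ) (x : E3) (i : Fin 3) : HP (sf q R) x i (-(2 * yc q i x)) := by
  have h := (HP.const R x i).sub (HP_rho q x i)
  exact ⟨h.1, h.2.trans (by ring)⟩

/-- `C^n` with compact support -/
def CK (n : ℕ) (f : E3 → ℝ) : Prop := ContDiff ℝ n f ∧ HasCompactSupport f

lemma CK.hp {f : E3 → ℝ} {n : ℕ} (hf : CK (n+1) f) (x : E3) (i : Fin 3) :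
    HP f x i (dd i f x) :=
  ⟨hf.1.differentiable (by simp) x, rfl⟩

lemma CK.d {f : E3 → ℝ} {n : ℕ} (hf : CK (n+1) f) (i : Fin 3) : CK n (dd i f) := by
  refine ⟨?_, hf.2.fderiv_apply (𝕜 := ℝ) (e3 i)⟩
  have h := hf.1.fderiv_right (m := n) (by simp)
  exact h.clm_apply contDiff_const

lemma CK.of_le {f : E3 → ℝ} {n m : ℕ} (hf : CK n f) (h : m ≤ n) : CK m f :=
  ⟨hf.1.of_le (by exact_mod_cast h), hf.2⟩

lemma CK.add {f g : E3 → ℝ} {n : ℕ} (hf : CK n f) (hg : CK n g) : CK n (fun x => f x + g x) :=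
  ⟨hf.1.add hg.1, hf.2.add hg.2⟩

lemma CK.sub {f g : E3 → ℝ} {n : ℕ} (hf : CK n f) (hg : CK n g) : CK n (fun x => f x - g x) :=
  ⟨hf.1.sub hg.1, hf.2.sub hg.2⟩

lemma CK.mul_left {f g : E3 → ℝ} {n : ℕ} (hf : ContDiff ℝ n f) (hg : CK n g) :
    CK n (fun x => f x * g x) :=
  ⟨hf.mul hg.1, hg.2.mul_left⟩

lemma CK.mul {f g : E3 → ℝ} {n : ℕ} (hf : CK n f) (hg : CK n g) :
    CK n (fun x => f x * g x) := CK.mul_left hf.1 hg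

lemma CK.sq {f : E3 → ℝ} {n : ℕ} (hf : CK n f) :
    CK n (fun x => f x ^ 2) := by simpa [pow_two] using hf.mul hf

lemma CK.zero {n : ℕ} : CK n (fun _ => 0) := ⟨contDiff_const, HasCompactSupport.zero⟩

lemma CK.sum {ι : Type*} {n : ℕ} (s : Finset ι) {f : ι → E3 → ℝ} (hf : ∀ i, CK n (f i)) :
    CK n (fun x => ∑ i ∈ s, f i x) := by
  classical
  induction s using Finset.induction_on with
  | empty => simpa using CK.zero
  | insert a s ha ih => simp only [Finset.sum_insert ha]; exact (hf a).add ih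

lemma CK.integrable {f : E3 → ℝ} {n : ℕ} (hf : CK n f) : Integrable f :=
  hf.1.continuous.integrable_of_hasCompactSupport hf.2

lemma CK.integral_dd {f : E3 → ℝ} (hf : CK 1 f) (i : Fin 3) : ∫ x, dd i f x = 0 := by
  have h1 : Integrable (fun x => fderiv ℝ f x (e3 i)) (volume : Measure E3) :=
    (CK.d (n := 0) hf i).integrable
  have h := integral_mul_fderiv_eq_neg_fderiv_mul_of_integrable (μ := (volume : Measure E3))
    (f := fun _ : E3 => (1:ℝ)) (g := f) (v := e3 i)
    (by simp) (by simpa using h1)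
    (by simpa using hf.integrable) (by simp)
    (fun x _ => hf.1.differentiable (by simp) x)
  simpa [dd, pd] using h

lemma dd_comm {f : E3 → ℝ} (hf : ContDiff ℝ 2 f) (i j : Fin 3) :
    dd i (dd j f) = dd j (dd i f) := by
  funext x
  have hs : IsSymmSndFDerivAt ℝ f x := hf.contDiffAt.isSymmSndFDerivAt (by simp)
  have hd : DifferentiableAt ℝ (fderiv ℝ f) x :=
    (hf.fderiv_right (m := 1) (by norm_num)).differentiable (by norm_num) x
  have key : ∀ a b : Fin 3, dd a (dd b f) x = fderiv ℝ (fderiv ℝ f) x (e3 a) (e3 b) := by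
    intro a b
    unfold dd pd
    rw [fderiv_clm_apply hd (differentiableAt_const _)]
    simp
  rw [key, key]
  exact hs _ _

lemma dd_congr {f g : E3 → ℝ} {x : E3} (h : f =ᶠ[nhds x] g) (i : Fin 3) :
    dd i f =ᶠ[nhds x] dd i g := by
  filter_upwards [h.fderiv (𝕜 := ℝ)] with y hy
  simp [dd, pd, hy]

lemma lap_eq (f : E3 → ℝ) : lap f = fun x => ∑ i, dd i (dd i f) x := rfl

lemma lap_congr {f g : E3 → ℝ} {x : E3} (h : f =ᶠ[nhds x] g) :
    lap f =ᶠ[nhds x] lap g := by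
  have h1 := fun i => dd_congr (dd_congr h i) i
  filter_upwards [h1 0, h1 1, h1 2] with y h0 h1 h2
  simp [lap_eq, Fin.sum_univ_three, h0, h1, h2]

lemma bilap_congr {f g : E3 → ℝ} {x : E3} (h : f =ᶠ[nhds x] g) : bilap f x = bilap g x :=
  (lap_congr (lap_congr h)).eq_of_nhds

lemma esum_eq (f : E3 → ℝ) (x : E3) : esum f x =
    (∑ i, ∑ j, ∑ k, (dd i (dd j (dd k f)) x) ^ 2) + (∑ i, ∑ j, (dd i (dd j f) x) ^ 2)
    + (∑ i, (dd i f x) ^ 2) + (f x) ^ 2 := rfl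

lemma esum_congr {f g : E3 → ℝ} {x : E3} (h : f =ᶠ[nhds x] g) : esum f x = esum g x := by
  rw [esum_eq, esum_eq, h.eq_of_nhds]
  simp only [(dd_congr h _).eq_of_nhds, (dd_congr (dd_congr h _) _).eq_of_nhds,
    (dd_congr (dd_congr (dd_congr h _) _) _).eq_of_nhds]

lemma CK.l {f : E3 → ℝ} {n : ℕ} (hf : CK (n+2) f) : CK n (lap f) := by
  rw [lap_eq]
  exact CK.sum _ fun i => (CK.d (n := n) (CK.d (n := n+1) hf i) i)

lemma dd_lap {f : E3 → ℝ} (hf : CK 3 f) (i : Fin 3) : dd i (lap f) = lap (dd i f) := by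
  funext x
  have h : ∀ k, HP (dd k (dd k f)) x i (dd i (dd k (dd k f)) x) := fun k =>
    CK.hp (n := 0) (CK.d (n := 1) (CK.d (n := 2) hf k) k) x i
  have h2 := ((h 0).add (h 1)).add (h 2)
  have e : lap f = fun y => dd 0 (dd 0 f) y + dd 1 (dd 1 f) y + dd 2 (dd 2 f) y := by
    funext y; simp [lap_eq, Fin.sum_univ_three]
  have e2 : ∀ k, dd i (dd k (dd k f)) = dd k (dd k (dd i f)) := fun k => by
    rw [dd_comm (CK.d (n := 2) hf k).1, dd_comm (hf.of_le (m := 2) (by norm_num)).1 i k]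
  rw [e]
  refine h2.2.trans ?_
  rw [e2, e2, e2]
  simp [lap_eq, Fin.sum_univ_three]

lemma tsupport_dd (f : E3 → ℝ) (i : Fin 3) : tsupport (dd i f) ⊆ tsupport f :=
  tsupport_fderiv_apply_subset ℝ (e3 i)

lemma tsupport_lap (f : E3 → ℝ) : tsupport (lap f) ⊆ tsupport f := by
  refine closure_minimal ?_ (isClosed_tsupport f)
  intro x hx
  by_contra h
  have h0 : f =ᶠ[nhds x] (fun _ => 0) := notMem_tsupport_iff_eventuallyEq.mp h
  have := (lap_congr h0).eq_of_nhds
  apply hx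
  rw [this]
  have hz : ∀ i, dd i (fun _ => (0:ℝ)) = fun _ => 0 := fun i => by
    funext y; simp [dd, pd]
  simp [lap_eq, hz]


/-- radial derivative `x·∇w` -/
def Ew (q : E3) (w : E3 → ℝ) : E3 → ℝ :=
  fun x => yc q 0 x * dd 0 w x + yc q 1 x * dd 1 w x + yc q 2 x * dd 2 w x

/-- squared gradient -/
def G2 (w : E3 → ℝ) : E3 → ℝ :=
  fun x => dd 0 w x * dd 0 w x + dd 1 w x * dd 1 w x + dd 2 w x * dd 2 w x

/-- zeroth-order coefficient -/
def mf (q : E3) (R t : ℝ) : E3 → ℝ :=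
  fun x => 16 * t ^ 2 * (sf q R x * sf q R x * rho q x) + 12 * t * sf q R x + 8 * t * rho q x

/-- flux -/
def FF (q : E3) (R t : ℝ) (w : E3 → ℝ) (i : Fin 3) : E3 → ℝ :=
  fun x => dd i w x * (8 * t * (sf q R x * Ew q w x) + (-16) * t * (rho q x * w x))
    - 4 * t * (sf q R x * (yc q i x * G2 w x)) + 16 * t * (yc q i x * (w x * w x))
    + 4 * t * (mf q R t x * (sf q R x * (yc q i x * (w x * w x))))

lemma HP.cmul {f : E3 → ℝ} {x : E3} {i : Fin 3} {a : ℝ} (c : ℝ) (hf : HP f x i a) :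
    HP (fun y => c * f y) x i (c * a) := by
  have := (HP.const c x i).mul hf
  exact ⟨this.1, this.2.trans (by ring)⟩

lemma HP_FF {q : E3} {R t : ℝ} {w : E3 → ℝ} (hw : CK 2 w) (x : E3) (i : Fin 3) :
    ∃ e g m : ℝ, HP (FF q R t w i) x i
      (dd i (dd i w) x * (8 * t * (sf q R x * Ew q w x) + (-16) * t * (rho q x * w x))
       + dd i w x * (8 * t * (sf q R x * e - 2 * yc q i x * Ew q w x)
           + (-16) * t * (rho q x * dd i w x + 2 * yc q i x * w x))
       - 4 * t * (-(2 * yc q i x) * (yc q i x * G2 w x) + sf q R x * (G2 w x + yc q i x * g))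
       + 16 * t * (w x * w x + yc q i x * (2 * w x * dd i w x))
       + 4 * t * (m * (sf q R x * (yc q i x * (w x * w x)))
          + mf q R t x * (-(2 * yc q i x) * (yc q i x * (w x * w x))
             + sf q R x * (w x * w x + yc q i x * (2 * w x * dd i w x)))))
      ∧ e = dd i w x + (yc q 0 x * dd i (dd 0 w) x + yc q 1 x * dd i (dd 1 w) x
          + yc q 2 x * dd i (dd 2 w) x)
      ∧ g = 2 * (dd 0 w x * dd i (dd 0 w) x + dd 1 w x * dd i (dd 1 w) x
          + dd 2 w x * dd i (dd 2 w) x)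
      ∧ m = 16 * t ^ 2 * (-(4 * yc q i x * sf q R x * rho q x)
          + sf q R x * sf q R x * (2 * yc q i x)) - 24 * t * yc q i x + 16 * t * yc q i x := by
  have h1 : ∀ j, HP (dd j w) x i (dd i (dd j w) x) := fun j =>
    CK.hp (n := 0) (CK.d (n := 1) hw j) x i
  have h0 : HP w x i (dd i w x) := CK.hp (n := 1) hw x i
  have hy := fun j => HP_yc q j x i
  have hyi : HP (yc q i) x i 1 := by simpa using hy i
  have hs := HP_sf q R x i
  have hr := HP_rho q x i
  have hE : HP (Ew q w) x i _ :=
    (((hy 0).mul (h1 0)).add ((hy 1).mul (h1 1))).add ((hy 2).mul (h1 2))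
  have hG : HP (G2 w) x i _ :=
    (((h1 0).mul (h1 0)).add ((h1 1).mul (h1 1))).add ((h1 2).mul (h1 2))
  have hm : HP (mf q R t) x i _ :=
    (((((hs.mul hs).mul hr).cmul (16 * t ^ 2)).add (hs.cmul (12 * t)))).add (hr.cmul (8 * t))
  have hww := h0.mul h0
  have hF : HP (FF q R t w i) x i _ :=
    ((((h1 i).mul (((hs.mul hE).cmul (8 * t)).add ((hr.mul h0).cmul ((-16) * t)))).sub
      ((hs.mul (hyi.mul hG)).cmul (4 * t))).add ((hyi.mul hww).cmul (16 * t))).add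
      ((hm.mul (hs.mul (hyi.mul hww))).cmul (4 * t))
  refine ⟨_, _, _, ⟨hF.1, hF.2.trans ?_⟩, rfl, rfl, rfl⟩
  fin_cases i <;> simp <;> ring

lemma carl_identity {q : E3} {R t : ℝ} {w : E3 → ℝ} (hw : CK 2 w) (x : E3) :
    (lap w x + mf q R t x * w x) * (8 * t * sf q R x * Ew q w x - 16 * t * rho q x * w x)
     = 16 * t * Ew q w x ^ 2 + (4 * t * sf q R x + 8 * t * rho q x) * G2 w x
      + (64 * t ^ 3 * sf q R x ^ 2 * rho q x * (2 * rho q x - 5 * sf q R x)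
        - t ^ 2 * (64 * rho q x ^ 2 + 160 * sf q R x * rho q x + 144 * sf q R x ^ 2)
        - 48 * t) * w x ^ 2
      + ∑ i, dd i (FF q R t w i) x := by
  obtain ⟨e0, g0, m0, h0, he0, hg0, hm0⟩ := HP_FF (q := q) (R := R) (t := t) hw x 0
  obtain ⟨e1, g1, m1, h1, he1, hg1, hm1⟩ := HP_FF (q := q) (R := R) (t := t) hw x 1
  obtain ⟨e2, g2, m2, h2, he2, hg2, hm2⟩ := HP_FF (q := q) (R := R) (t := t) hw x 2
  have c01 := congrFun (dd_comm hw.1 1 0) x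
  have c02 := congrFun (dd_comm hw.1 2 0) x
  have c12 := congrFun (dd_comm hw.1 2 1) x
  have k0 : dd 0 (FF q R t w 0) x = _ := h0.2
  have k1 : dd 1 (FF q R t w 1) x = _ := h1.2
  have k2 : dd 2 (FF q R t w 2) x = _ := h2.2
  rw [Fin.sum_univ_three, k0, k1, k2, he0, he1, he2, hg0, hg1, hg2, hm0, hm1, hm2]
  rw [lap_eq]
  simp only [Fin.sum_univ_three, c01, c02, c12]
  simp only [mf, Ew, G2]
  generalize sf q R x = s
  have hr : rho q x = yc q 0 x * yc q 0 x + yc q 1 x * yc q 1 x + yc q 2 x * yc q 2 x := rfl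
  rw [hr]
  ring


/-- exponential weight `e^φ` -/
def gw (q : E3) (R t : ℝ) : E3 → ℝ := fun x => Real.exp (t * (sf q R x * sf q R x))

lemma contDiff_gw (q : E3) (R t : ℝ) {n : WithTop ℕ∞} : ContDiff ℝ n (gw q R t) := by
  unfold gw
  exact (contDiff_const.mul ((contDiff_sf q R).mul (contDiff_sf q R))).exp

lemma HP_gw (q : E3) (R t : ℝ) (x : E3) (i : Fin 3) :
    HP (gw q R t) x i (gw q R t x * (-(4 * t * sf q R x * yc q i x))) := by
  have h := (((HP_sf q R x i).mul (HP_sf q R x i)).cmul t).exp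
  refine ⟨h.1, h.2.trans ?_⟩
  unfold gw; ring

lemma dd_w {q : E3} {R t : ℝ} {f : E3 → ℝ} (hf : CK 2 f) (i : Fin 3) :
    dd i (fun x => gw q R t x * f x) =
      fun x => gw q R t x * (dd i f x - 4 * t * (sf q R x * (yc q i x * f x))) := by
  funext x
  have h := (HP_gw q R t x i).mul (CK.hp (n := 1) hf x i)
  refine h.2.trans ?_
  ring

lemma dd2_w {q : E3} {R t : ℝ} {f : E3 → ℝ} (hf : CK 2 f) (i : Fin 3) (x : E3) :
    dd i (dd i (fun x => gw q R t x * f x)) x =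
      gw q R t x * (dd i (dd i f) x - 8 * t * sf q R x * yc q i x * dd i f x
        + (16 * t ^ 2 * sf q R x ^ 2 * yc q i x ^ 2 + 8 * t * yc q i x ^ 2 - 4 * t * sf q R x)
          * f x) := by
  rw [dd_w hf]
  have hyi : HP (yc q i) x i 1 := by simpa using HP_yc q i x i
  have h := (HP_gw q R t x i).mul ((CK.hp (n := 0) (CK.d (n := 1) hf i) x i).sub
    (((HP_sf q R x i).mul (hyi.mul (CK.hp (n := 1) hf x i))).cmul (4 * t)))
  refine h.2.trans ?_
  ring

lemma coef_bound {s r r0 e t : ℝ} (hr0 : 0 < r0) (he : 0 < e) (h1 : r0 ≤ r) (h2 : e ≤ s)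
    (h3 : s ≤ 3 * e) (h4 : e ≤ r0 / 100) (h5 : 8 ≤ t * e ^ 2) (h6 : 1 ≤ t * r0 ^ 2) :
    100 * t ^ 3 * s ^ 2 * r ^ 2 ≤ 64 * t ^ 3 * s ^ 2 * r * (2 * r - 5 * s)
        - t ^ 2 * (64 * r ^ 2 + 160 * s * r + 144 * s ^ 2) - 48 * t := by
  have ht : 0 < t := by
    by_contra h
    push Not at h
    nlinarith [mul_nonneg (neg_nonneg.mpr h) (sq_nonneg e)]
  have hs : 0 < s := by linarith
  have hr : 0 < r := by linarith
  have hsr : s ≤ 3 / 100 * r := by linarith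
  have k1 : 8 ≤ t * s ^ 2 := h5.trans (by gcongr)
  have k2 : 1 ≤ t * r ^ 2 := h6.trans (by gcongr)
  have a1 : 64 * t ^ 3 * s ^ 2 * r * (185 / 100 * r) ≤ 64 * t ^ 3 * s ^ 2 * r * (2 * r - 5 * s) := by
    gcongr; linarith
  have a2 : t ^ 2 * (64 * r ^ 2 + 160 * s * r + 144 * s ^ 2) ≤ t ^ 2 * (70 * r ^ 2) := by
    gcongr
    nlinarith [mul_le_mul_of_nonneg_right hsr hr.le, mul_le_mul hsr hsr hs.le (by positivity)]
  have a3 : 48 * t * 1 ≤ 48 * t * (t * r ^ 2) := by gcongr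
  have a4 : 18 * t ^ 2 * r ^ 2 * 8 ≤ 18 * t ^ 2 * r ^ 2 * (t * s ^ 2) := by gcongr
  have a5 : 0 ≤ t ^ 2 * r ^ 2 := by positivity
  have a6 : 0 ≤ t ^ 3 * s ^ 2 * r ^ 2 := by positivity
  nlinarith

lemma G2_nonneg (f : E3 → ℝ) (x : E3) : 0 ≤ G2 f x := by
  unfold G2
  nlinarith [mul_self_nonneg (dd 0 f x), mul_self_nonneg (dd 1 f x), mul_self_nonneg (dd 2 f x)]

lemma carl_pointwise {q : E3} {r0 e t : ℝ} {f : E3 → ℝ} (hf : CK 2 f)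
    (hr0 : 0 < r0) (he : 0 < e) (h4 : e ≤ r0 / 100) (h5 : 8 ≤ t * e ^ 2) (h6 : 1 ≤ t * r0 ^ 2)
    (x : E3) (h1 : r0 ≤ rho q x) (h2 : rho q x ≤ r0 + 2 * e) :
    8 * t * r0 * (gw q (r0 + 3 * e) t x ^ 2 * G2 f x)
      + 100 * t ^ 3 * e ^ 2 * r0 ^ 2 * (gw q (r0 + 3 * e) t x ^ 2 * f x ^ 2)
      + 4 * ∑ i, dd i (FF q (r0 + 3 * e) t (fun x => gw q (r0 + 3 * e) t x * f x) i) x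
      ≤ gw q (r0 + 3 * e) t x ^ 2 * lap f x ^ 2 := by
  set R := r0 + 3 * e with hR
  set w : E3 → ℝ := fun x => gw q R t x * f x with hw
  have hwC : CK 2 w := CK.mul_left (contDiff_gw q R t) hf
  have id := carl_identity (q := q) (R := R) (t := t) hwC x
  have hsd : sf q R x = R - rho q x := rfl
  have hs1 : e ≤ sf q R x := by rw [hsd]; linarith
  have hs2 : sf q R x ≤ 3 * e := by rw [hsd]; linarith
  have hc := coef_bound hr0 he h1 hs1 hs2 h4 h5 h6
  have ht : 0 < t := by
    by_contra h
    push Not at h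
    nlinarith [mul_nonneg (neg_nonneg.mpr h) (sq_nonneg e)]
  have hs : 0 < sf q R x := by linarith
  have hr : rho q x = yc q 0 x * yc q 0 x + yc q 1 x * yc q 1 x + yc q 2 x * yc q 2 x := rfl
  have hrp : 0 < rho q x := by linarith
  -- conjugated operator
  have hP : gw q R t x * lap f x = (lap w x + mf q R t x * w x)
      + (8 * t * sf q R x * Ew q w x - 16 * t * rho q x * w x) := by
    simp only [lap_eq, Fin.sum_univ_three, Ew]
    rw [hw, dd2_w hf, dd2_w hf, dd2_w hf, dd_w hf, dd_w hf, dd_w hf]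
    simp only [mf]
    rw [hr]
    ring
  have hG : gw q R t x ^ 2 * G2 f x ≤ 2 * G2 w x + 32 * t ^ 2 * sf q R x ^ 2 * rho q x * w x ^ 2 := by
    have hi : ∀ i, gw q R t x * dd i f x = dd i w x + 4 * t * sf q R x * yc q i x * w x := by
      intro i
      rw [hw, dd_w hf]; ring
    have e1 : gw q R t x ^ 2 * G2 f x = (gw q R t x * dd 0 f x) ^ 2 + (gw q R t x * dd 1 f x) ^ 2
      + (gw q R t x * dd 2 f x) ^ 2 := by unfold G2; ring
    rw [e1, hi, hi, hi, hr]
    unfold G2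
    have := fun i => sq_nonneg (dd i w x - 4 * t * sf q R x * yc q i x * w x)
    nlinarith [this 0, this 1, this 2]
  have hw2 : gw q R t x ^ 2 * f x ^ 2 = w x ^ 2 := by rw [hw]; ring
  have hG0 : 0 ≤ G2 w x := G2_nonneg w x
  have hGf : 0 ≤ gw q R t x ^ 2 * G2 f x := mul_nonneg (sq_nonneg _) (G2_nonneg f x)
  have hP2 : gw q R t x ^ 2 * lap f x ^ 2 = ((lap w x + mf q R t x * w x)
      + (8 * t * sf q R x * Ew q w x - 16 * t * rho q x * w x)) ^ 2 := by
    rw [← hP]; ring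
  rw [hP2, hw2]
  have sq := sq_nonneg ((lap w x + mf q R t x * w x)
      - (8 * t * sf q R x * Ew q w x - 16 * t * rho q x * w x))
  set S := lap w x + mf q R t x * w x
  set A := 8 * t * sf q R x * Ew q w x - 16 * t * rho q x * w x
  set D := ∑ i, dd i (FF q R t w i) x
  have b1 : 8 * t * r0 * (gw q R t x ^ 2 * G2 f x) ≤
      8 * t * rho q x * (2 * G2 w x + 32 * t ^ 2 * sf q R x ^ 2 * rho q x * w x ^ 2) := by
    gcongr
  have b2 : 100 * t ^ 3 * e ^ 2 * r0 ^ 2 * w x ^ 2 ≤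
      100 * t ^ 3 * sf q R x ^ 2 * rho q x ^ 2 * w x ^ 2 := by gcongr
  have b3 := mul_le_mul_of_nonneg_right hc (sq_nonneg (w x))
  have b4 : 0 ≤ 4 * t * sf q R x * G2 w x := by positivity
  have b5 : 0 ≤ 8 * t * rho q x * G2 w x := by positivity
  have b6 : 0 ≤ t * Ew q w x ^ 2 := by positivity
  have b7 : 0 ≤ t ^ 3 * sf q R x ^ 2 * rho q x ^ 2 * w x ^ 2 := by positivity
  clear_value S A D
  clear hc hP2 hP hG hw2 hR
  linarith

lemma eq_zero_of_not_tsupport {f : E3 → ℝ} {x : E3} (h : x ∉ tsupport f) : f x = 0 :=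
  image_eq_zero_of_notMem_tsupport h

lemma CK_FF {q : E3} {R t : ℝ} {w : E3 → ℝ} (hw : CK 2 w) (i : Fin 3) : CK 1 (FF q R t w i) := by
  have hd : ∀ j, CK 1 (dd j w) := fun j => CK.d (n := 1) hw j
  have hw1 : CK 1 w := hw.of_le (by norm_num)
  have hs : ContDiff ℝ (1:ℕ) (sf q R) := contDiff_sf q R
  have hr : ContDiff ℝ (1:ℕ) (rho q) := contDiff_rho q
  have hy : ∀ j, ContDiff ℝ (1:ℕ) (yc q j) := fun j => contDiff_yc q j
  have cm : ∀ (c : ℝ) {f : E3 → ℝ}, CK 1 f → CK 1 (fun x => c * f x) := fun c f hf =>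
    CK.mul_left contDiff_const hf
  have hE : CK 1 (Ew q w) :=
    ((CK.mul_left (hy 0) (hd 0)).add (CK.mul_left (hy 1) (hd 1))).add (CK.mul_left (hy 2) (hd 2))
  have hG : CK 1 (G2 w) :=
    (((hd 0).mul (hd 0)).add ((hd 1).mul (hd 1))).add ((hd 2).mul (hd 2))
  have hm : ContDiff ℝ (1:ℕ) (mf q R t) :=
    ((contDiff_const.mul ((hs.mul hs).mul hr)).add (contDiff_const.mul hs)).add
      (contDiff_const.mul hr)
  have hww := hw1.mul hw1
  exact ((((hd i).mul ((cm (8 * t) (CK.mul_left hs hE)).add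
    (cm ((-16) * t) (CK.mul_left hr hw1)))).sub
      (cm (4 * t) (CK.mul_left hs (CK.mul_left (hy i) hG)))).add
      (cm (16 * t) (CK.mul_left (hy i) hww))).add
      (cm (4 * t) (CK.mul_left hm (CK.mul_left hs (CK.mul_left (hy i) hww))))

lemma tsupport_FF (q : E3) (R t : ℝ) (w : E3 → ℝ) (i : Fin 3) :
    tsupport (FF q R t w i) ⊆ tsupport w := by
  refine closure_minimal ?_ (isClosed_tsupport w)
  intro x hx
  by_contra h
  apply hx
  have h0 : w x = 0 := eq_zero_of_not_tsupport h
  have h1 : ∀ j, dd j w x = 0 := fun j => eq_zero_of_not_tsupport fun h' => h (tsupport_dd w j h')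
  simp [FF, G2, h0, h1]

/-- annulus -/
def Ann (q : E3) (r0 e : ℝ) : Set E3 := {x | r0 ≤ rho q x ∧ rho q x ≤ r0 + 2 * e}

lemma CK_G2 {f : E3 → ℝ} {n : ℕ} (hf : CK (n+1) f) : CK n (G2 f) :=
  (((hf.d 0).mul (hf.d 0)).add ((hf.d 1).mul (hf.d 1))).add ((hf.d 2).mul (hf.d 2))

lemma CK_gw {q : E3} {R t : ℝ} {f : E3 → ℝ} {n : ℕ} (hf : CK n f) :
    CK n (fun x => gw q R t x ^ 2 * f x) :=
  CK.mul_left ((contDiff_gw q R t).pow 2) hf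

lemma carleman {q : E3} {r0 e t : ℝ} {f : E3 → ℝ} (hf : CK 2 f)
    (hr0 : 0 < r0) (he : 0 < e) (h4 : e ≤ r0 / 100) (h5 : 8 ≤ t * e ^ 2) (h6 : 1 ≤ t * r0 ^ 2)
    (hsupp : tsupport f ⊆ Ann q r0 e) :
    8 * t * r0 * (∫ x, gw q (r0 + 3 * e) t x ^ 2 * G2 f x)
      + 100 * t ^ 3 * e ^ 2 * r0 ^ 2 * (∫ x, gw q (r0 + 3 * e) t x ^ 2 * f x ^ 2)
      ≤ ∫ x, gw q (r0 + 3 * e) t x ^ 2 * lap f x ^ 2 := by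
  set R := r0 + 3 * e with hR
  set w : E3 → ℝ := fun x => gw q R t x * f x with hw
  have hwC : CK 2 w := CK.mul_left (contDiff_gw q R t) hf
  have hFC : ∀ i, CK 1 (FF q R t w i) := fun i => CK_FF hwC i
  have cm : ∀ (c : ℝ) {f : E3 → ℝ}, CK 0 f → CK 0 (fun x => c * f x) := fun c f hf =>
    CK.mul_left contDiff_const hf
  have c1 : CK 0 (fun x => gw q R t x ^ 2 * G2 f x) := CK_gw (CK_G2 (hf.of_le (by norm_num)))
  have c2 : CK 0 (fun x => gw q R t x ^ 2 * f x ^ 2) := CK_gw (hf.of_le (by norm_num)).sq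
  have c3 : CK 0 (fun x => gw q R t x ^ 2 * lap f x ^ 2) := CK_gw (CK.l (n := 0) hf).sq
  have c4 : ∀ i, CK 0 (dd i (FF q R t w i)) := fun i => CK.d (n := 0) (hFC i) i
  have c5 : CK 0 (fun x => ∑ i, dd i (FF q R t w i) x) := CK.sum _ c4
  have i5 : ∫ x, ∑ i, dd i (FF q R t w i) x = 0 := by
    rw [integral_finsetSum _ (fun i _ => (c4 i).integrable)]
    simp [CK.integral_dd (hFC _)]
  have main : ∫ x, (8 * t * r0 * (gw q R t x ^ 2 * G2 f x)
      + 100 * t ^ 3 * e ^ 2 * r0 ^ 2 * (gw q R t x ^ 2 * f x ^ 2)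
      + 4 * ∑ i, dd i (FF q R t w i) x) ≤ ∫ x, gw q R t x ^ 2 * lap f x ^ 2 := by
    refine integral_mono (((cm _ c1).add (cm _ c2)).add (cm _ c5)).integrable c3.integrable ?_
    intro x
    by_cases hx : x ∈ tsupport f
    · exact carl_pointwise hf hr0 he h4 h5 h6 x (hsupp hx).1 (hsupp hx).2
    · have z0 : f x = 0 := eq_zero_of_not_tsupport hx
      have z1 : ∀ i, dd i f x = 0 := fun i =>
        eq_zero_of_not_tsupport fun h => hx (tsupport_dd f i h)
      have hw' : tsupport w ⊆ tsupport f := by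
        refine closure_mono fun y hy => ?_
        intro h0; apply hy; simp [hw, h0]
      have z2 : ∀ i, dd i (FF q R t w i) x = 0 := fun i =>
        eq_zero_of_not_tsupport fun h => hx (hw' (tsupport_FF _ _ _ _ i (tsupport_dd _ i h)))
      have : 0 ≤ gw q R t x ^ 2 * lap f x ^ 2 := by positivity
      simpa [z0, z1, z2, G2] using this
  rw [integral_add ((cm _ c1).add (cm _ c2)).integrable (cm _ c5).integrable,
    integral_add (cm _ c1).integrable (cm _ c2).integrable, integral_const_mul,
    integral_const_mul, integral_const_mul, i5] at main
  linarith


/-- squared Hessian -/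
def HH (f : E3 → ℝ) : E3 → ℝ := fun x => ∑ i, ∑ j, (dd i (dd j f) x) ^ 2

/-- flux for the elliptic estimate -/
def EF (q : E3) (R t : ℝ) (f : E3 → ℝ) (k : Fin 3) : E3 → ℝ :=
  fun x => (gw q R t x * gw q R t x) * ((dd 0 f x * dd k (dd 0 f) x + dd 1 f x * dd k (dd 1 f) x
    + dd 2 f x * dd k (dd 2 f) x) - dd k f x * lap f x)

lemma HP_EF {q : E3} {R t : ℝ} {f : E3 → ℝ} (hf : CK 3 f) (x : E3) (k : Fin 3) :
    HP (EF q R t f k) x k (gw q R t x ^ 2 * (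
      (-8 * t * sf q R x * yc q k x) * ((dd 0 f x * dd k (dd 0 f) x + dd 1 f x * dd k (dd 1 f) x
        + dd 2 f x * dd k (dd 2 f) x) - dd k f x * lap f x)
      + ((dd k (dd 0 f) x) ^ 2 + (dd k (dd 1 f) x) ^ 2 + (dd k (dd 2 f) x) ^ 2
        + (dd 0 f x * dd k (dd k (dd 0 f)) x + dd 1 f x * dd k (dd k (dd 1 f)) x
          + dd 2 f x * dd k (dd k (dd 2 f)) x))
      - (dd k (dd k f) x * lap f x + dd k f x * dd k (lap f) x))) := by
  have h1 : ∀ j, HP (dd j f) x k (dd k (dd j f) x) := fun j => CK.hp (n := 1) (CK.d (n := 2) hf j) x k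
  have h2 : ∀ i j, HP (dd i (dd j f)) x k (dd k (dd i (dd j f)) x) := fun i j =>
    CK.hp (n := 0) (CK.d (n := 1) (CK.d (n := 2) hf j) i) x k
  have hl : HP (lap f) x k (dd k (lap f) x) := CK.hp (n := 0) (CK.l (n := 1) hf) x k
  have hg := HP_gw q R t x k
  have h := (hg.mul hg).mul (((((h1 0).mul (h2 k 0)).add ((h1 1).mul (h2 k 1))).add
    ((h1 2).mul (h2 k 2))).sub ((h1 k).mul hl))
  refine ⟨h.1, h.2.trans ?_⟩
  ring

lemma ell_identity {q : E3} {R t : ℝ} {f : E3 → ℝ} (hf : CK 3 f) (x : E3) :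
    ∑ k, dd k (EF q R t f k) x = gw q R t x ^ 2 * (
      (∑ k, (-8 * t * sf q R x * yc q k x) * ((dd 0 f x * dd k (dd 0 f) x
        + dd 1 f x * dd k (dd 1 f) x + dd 2 f x * dd k (dd 2 f) x) - dd k f x * lap f x))
      + HH f x - lap f x ^ 2) := by
  have k0 : ∀ k, dd k (EF q R t f k) x = _ := fun k => (HP_EF hf x k).2
  have hl : ∀ j, dd j (lap f) x = dd 0 (dd 0 (dd j f)) x + dd 1 (dd 1 (dd j f)) x
      + dd 2 (dd 2 (dd j f)) x := by
    intro j
    rw [dd_lap hf]; simp [lap_eq, Fin.sum_univ_three]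
  have hlf : lap f x = dd 0 (dd 0 f) x + dd 1 (dd 1 f) x + dd 2 (dd 2 f) x := by
    simp [lap_eq, Fin.sum_univ_three]
  simp only [k0, Fin.sum_univ_three, hl, HH, hlf]
  ring

lemma ell_pointwise {q : E3} {R t : ℝ} {f : E3 → ℝ} (hf : CK 3 f) (x : E3) :
    gw q R t x ^ 2 * HH f x ≤ 4 * (gw q R t x ^ 2 * lap f x ^ 2)
      + 6 * (16 * t ^ 2 * sf q R x ^ 2 * rho q x) * (gw q R t x ^ 2 * G2 f x)
      + 2 * ∑ k, dd k (EF q R t f k) x := by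
  rw [ell_identity hf]
  have hr : rho q x = yc q 0 x * yc q 0 x + yc q 1 x * yc q 1 x + yc q 2 x * yc q 2 x := rfl
  have hg : 0 ≤ gw q R t x ^ 2 := sq_nonneg _
  suffices h : HH f x ≤ 4 * lap f x ^ 2 + 6 * (16 * t ^ 2 * sf q R x ^ 2 * rho q x) * G2 f x
      + 2 * ((∑ k, (-8 * t * sf q R x * yc q k x) * ((dd 0 f x * dd k (dd 0 f) x
        + dd 1 f x * dd k (dd 1 f) x + dd 2 f x * dd k (dd 2 f) x) - dd k f x * lap f x))
      + HH f x - lap f x ^ 2) by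
    have := mul_le_mul_of_nonneg_left h hg
    linarith
  have a : ∀ k j, 0 ≤ (dd k (dd j f) x - 8 * t * sf q R x * yc q k x * dd j f x) ^ 2 := fun k j =>
    sq_nonneg _
  have b := sq_nonneg (lap f x + 4 * t * sf q R x *
    (yc q 0 x * dd 0 f x + yc q 1 x * dd 1 f x + yc q 2 x * dd 2 f x))
  have c : ∀ i j, 0 ≤ (4 * t * sf q R x * (yc q i x * dd j f x - yc q j x * dd i f x)) ^ 2 :=
    fun i j => sq_nonneg _
  simp only [HH, Fin.sum_univ_three, G2]
  rw [hr]
  linarith [a 0 0, a 0 1, a 0 2, a 1 0, a 1 1, a 1 2, a 2 0, a 2 1, a 2 2, b, c 0 1, c 0 2, c 1 2]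

lemma CK_EF {q : E3} {R t : ℝ} {f : E3 → ℝ} (hf : CK 3 f) (k : Fin 3) : CK 1 (EF q R t f k) := by
  have hd : ∀ j, CK 1 (dd j f) := fun j => (CK.d (n := 2) hf j).of_le (by norm_num)
  have hd2 : ∀ i j, CK 1 (dd i (dd j f)) := fun i j => (CK.d (n := 1) (CK.d (n := 2) hf j) i)
  have hl : CK 1 (lap f) := CK.l (n := 1) hf
  exact CK.mul_left ((contDiff_gw q R t).mul (contDiff_gw q R t))
    (((((hd 0).mul (hd2 k 0)).add ((hd 1).mul (hd2 k 1))).add ((hd 2).mul (hd2 k 2))).sub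
      ((hd k).mul hl))

lemma CK_HH {f : E3 → ℝ} {n : ℕ} (hf : CK (n+2) f) : CK n (HH f) :=
  CK.sum _ fun i => CK.sum _ fun j =>
    (CK.d (n := n) (CK.d (n := n+1) hf j) i).sq

lemma elliptic {q : E3} {r0 e t : ℝ} {f : E3 → ℝ} (hf : CK 3 f)
    (hr0 : 0 < r0) (he : 0 < e) (h4 : e ≤ r0 / 100) (h5 : 8 ≤ t * e ^ 2) (h6 : 1 ≤ t * r0 ^ 2)
    (hsupp : tsupport f ⊆ Ann q r0 e) :
    (∫ x, gw q (r0 + 3 * e) t x ^ 2 * HH f x)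
      ≤ 217 * (t * e ^ 2) * ∫ x, gw q (r0 + 3 * e) t x ^ 2 * lap f x ^ 2 := by
  have hcar := carleman (hf.of_le (m := 2) (by norm_num)) hr0 he h4 h5 h6 hsupp
  set R := r0 + 3 * e with hR
  have ht : 0 < t := by
    by_contra h
    push Not at h
    nlinarith [mul_nonneg (neg_nonneg.mpr h) (sq_nonneg e)]
  have cm : ∀ (c : ℝ) {f : E3 → ℝ}, CK 0 f → CK 0 (fun x => c * f x) := fun c f hf =>
    CK.mul_left contDiff_const hf
  have c1 : CK 0 (fun x => gw q R t x ^ 2 * G2 f x) := CK_gw (CK_G2 (hf.of_le (by norm_num)))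
  have c2 : CK 0 (fun x => gw q R t x ^ 2 * HH f x) := CK_gw (CK_HH (hf.of_le (by norm_num)))
  have c3 : CK 0 (fun x => gw q R t x ^ 2 * lap f x ^ 2) :=
    CK_gw (CK.l (n := 0) (hf.of_le (by norm_num))).sq
  have hFC : ∀ k, CK 1 (EF q R t f k) := fun k => CK_EF hf k
  have c4 : ∀ i, CK 0 (dd i (EF q R t f i)) := fun i => CK.d (n := 0) (hFC i) i
  have c5 : CK 0 (fun x => ∑ i, dd i (EF q R t f i) x) := CK.sum _ c4
  have i5 : ∫ x, ∑ i, dd i (EF q R t f i) x = 0 := by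
    rw [integral_finsetSum _ (fun i _ => (c4 i).integrable)]
    simp [CK.integral_dd (hFC _)]
  have main : ∫ x, gw q R t x ^ 2 * HH f x ≤ ∫ x, (4 * (gw q R t x ^ 2 * lap f x ^ 2)
      + (1728 * t ^ 2 * e ^ 2 * r0) * (gw q R t x ^ 2 * G2 f x)
      + 2 * ∑ k, dd k (EF q R t f k) x) := by
    refine integral_mono c2.integrable (((cm _ c3).add (cm _ c1)).add (cm _ c5)).integrable ?_
    intro x
    have hp := ell_pointwise (q := q) (R := R) (t := t) hf x
    refine hp.trans ?_
    have hG : 0 ≤ gw q R t x ^ 2 * G2 f x := mul_nonneg (sq_nonneg _) (G2_nonneg f x)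
    by_cases hx : x ∈ tsupport f
    · obtain ⟨h1, h2⟩ := hsupp hx
      have hsd : sf q R x = R - rho q x := rfl
      have hs1 : e ≤ sf q R x := by rw [hsd]; linarith
      have hs2 : sf q R x ≤ 3 * e := by rw [hsd]; linarith
      have hs0 : 0 ≤ sf q R x := by linarith
      have hr2 : rho q x ≤ 2 * r0 := by linarith
      have hr1 : 0 ≤ rho q x := by linarith
      have : 6 * (16 * t ^ 2 * sf q R x ^ 2 * rho q x) ≤ 1728 * t ^ 2 * e ^ 2 * r0 := by
        calc 6 * (16 * t ^ 2 * sf q R x ^ 2 * rho q x)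
            ≤ 6 * (16 * t ^ 2 * (3 * e) ^ 2 * (2 * r0)) := by gcongr
          _ = 1728 * t ^ 2 * e ^ 2 * r0 := by ring
      have := mul_le_mul_of_nonneg_right this hG
      simp only
      linarith
    · have z1 : ∀ i, dd i f x = 0 := fun i =>
        eq_zero_of_not_tsupport fun h => hx (tsupport_dd f i h)
      simp [G2, z1]
  rw [integral_add ((cm _ c3).add (cm _ c1)).integrable (cm _ c5).integrable,
    integral_add (cm _ c3).integrable (cm _ c1).integrable, integral_const_mul,
    integral_const_mul, integral_const_mul, i5] at main
  have p1 : 0 ≤ ∫ x, gw q R t x ^ 2 * f x ^ 2 := integral_nonneg fun x => by positivity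
  have p2 : 0 ≤ ∫ x, gw q R t x ^ 2 * lap f x ^ 2 := integral_nonneg fun x => by positivity
  set IG := ∫ x, gw q R t x ^ 2 * G2 f x
  set IL := ∫ x, gw q R t x ^ 2 * lap f x ^ 2
  set I0 := ∫ x, gw q R t x ^ 2 * f x ^ 2
  have k1 : 8 * t * r0 * IG ≤ IL := by
    have : 0 ≤ 100 * t ^ 3 * e ^ 2 * r0 ^ 2 * I0 := by positivity
    linarith
  have k2 := mul_le_mul_of_nonneg_left k1 (show 0 ≤ 216 * (t * e ^ 2) by positivity)
  have k3 := mul_le_mul_of_nonneg_right h5 p2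
  nlinarith

lemma full_estimate {q : E3} {r0 e t : ℝ} {f : E3 → ℝ} (hf : CK 4 f)
    (hr0 : 0 < r0) (he : 0 < e) (h4 : e ≤ r0 / 100) (h5 : 8 ≤ t * e ^ 2) (h6 : 1 ≤ t * r0 ^ 2)
    (hsupp : tsupport f ⊆ Ann q r0 e) :
    (∫ x, gw q (r0 + 3 * e) t x ^ 2 * esum f x)
      ≤ (28 * e ^ 2 / r0 + 3 / (t * r0) ^ 2 + 1 / (t * r0) ^ 3 + 1 / (t * r0) ^ 4) *
        ∫ x, gw q (r0 + 3 * e) t x ^ 2 * bilap f x ^ 2 := by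
  have hL : CK 2 (lap f) := CK.l (n := 2) hf
  have hd : ∀ j, CK 3 (dd j f) := fun j => CK.d (n := 3) hf j
  have A1 := carleman (hf.of_le (m := 2) (by norm_num)) hr0 he h4 h5 h6 hsupp
  have A2 := carleman hL hr0 he h4 h5 h6 ((tsupport_lap f).trans hsupp)
  have B1 := elliptic (hf.of_le (m := 3) (by norm_num)) hr0 he h4 h5 h6 hsupp
  have B2 := fun j => elliptic (hd j) hr0 he h4 h5 h6 ((tsupport_dd f j).trans hsupp)
  set R := r0 + 3 * e with hR
  have ht : 0 < t := by
    by_contra h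
    push Not at h
    nlinarith [mul_nonneg (neg_nonneg.mpr h) (sq_nonneg e)]
  have c1 : CK 0 (fun x => gw q R t x ^ 2 * G2 f x) := CK_gw (CK_G2 (hf.of_le (by norm_num)))
  have c2 : CK 0 (fun x => gw q R t x ^ 2 * HH f x) := CK_gw (CK_HH (hf.of_le (by norm_num)))
  have c3 : ∀ j, CK 0 (fun x => gw q R t x ^ 2 * HH (dd j f) x) := fun j =>
    CK_gw (CK_HH ((hd j).of_le (by norm_num)))
  have c0 : CK 0 (fun x => gw q R t x ^ 2 * f x ^ 2) := CK_gw (hf.of_le (by norm_num)).sq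
  have c4 : ∀ j, CK 0 (fun x => gw q R t x ^ 2 * lap (dd j f) x ^ 2) := fun j =>
    CK_gw (CK.l (n := 0) ((hd j).of_le (by norm_num))).sq
  have split : (∫ x, gw q R t x ^ 2 * esum f x) =
      ((∫ x, gw q R t x ^ 2 * HH (dd 0 f) x) + (∫ x, gw q R t x ^ 2 * HH (dd 1 f) x)
        + (∫ x, gw q R t x ^ 2 * HH (dd 2 f) x)) + (∫ x, gw q R t x ^ 2 * HH f x)
      + (∫ x, gw q R t x ^ 2 * G2 f x) + (∫ x, gw q R t x ^ 2 * f x ^ 2) := by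
    rw [← integral_add (c3 0).integrable (c3 1).integrable,
      ← integral_add ((c3 0).add (c3 1)).integrable (c3 2).integrable,
      ← integral_add (((c3 0).add (c3 1)).add (c3 2)).integrable c2.integrable,
      ← integral_add ((((c3 0).add (c3 1)).add (c3 2)).add c2).integrable c1.integrable,
      ← integral_add (((((c3 0).add (c3 1)).add (c3 2)).add c2).add c1).integrable c0.integrable]
    congr 1
    funext x
    simp only [esum_eq, HH, G2, Fin.sum_univ_three]
    ring
  have split2 : (∫ x, gw q R t x ^ 2 * lap (dd 0 f) x ^ 2) + (∫ x, gw q R t x ^ 2 * lap (dd 1 f) x ^ 2)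
      + (∫ x, gw q R t x ^ 2 * lap (dd 2 f) x ^ 2) = ∫ x, gw q R t x ^ 2 * G2 (lap f) x := by
    rw [← integral_add (c4 0).integrable (c4 1).integrable,
      ← integral_add ((c4 0).add (c4 1)).integrable (c4 2).integrable]
    congr 1
    funext x
    simp only [G2, dd_lap (hf.of_le (m := 3) (by norm_num))]
    ring
  have hb : (fun x => gw q R t x ^ 2 * lap (lap f) x ^ 2) = fun x => gw q R t x ^ 2 * bilap f x ^ 2 := rfl
  rw [hb] at A2
  rw [split]
  have b0 := B2 0
  have b1 := B2 1
  have b2 := B2 2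
  have p1 : 0 ≤ ∫ x, gw q R t x ^ 2 * f x ^ 2 := integral_nonneg fun x => by positivity
  have p2 : 0 ≤ ∫ x, gw q R t x ^ 2 * lap f x ^ 2 := integral_nonneg fun x => by positivity
  have p3 : 0 ≤ ∫ x, gw q R t x ^ 2 * G2 f x := integral_nonneg fun x =>
    mul_nonneg (sq_nonneg _) (G2_nonneg _ _)
  have p4 : 0 ≤ ∫ x, gw q R t x ^ 2 * G2 (lap f) x := integral_nonneg fun x =>
    mul_nonneg (sq_nonneg _) (G2_nonneg _ _)
  have p5 : 0 ≤ ∫ x, gw q R t x ^ 2 * bilap f x ^ 2 := integral_nonneg fun x => by positivity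
  set I0 := ∫ x, gw q R t x ^ 2 * f x ^ 2
  set IG := ∫ x, gw q R t x ^ 2 * G2 f x
  set IH := ∫ x, gw q R t x ^ 2 * HH f x
  set IL := ∫ x, gw q R t x ^ 2 * lap f x ^ 2
  set IGL := ∫ x, gw q R t x ^ 2 * G2 (lap f) x
  set IB := ∫ x, gw q R t x ^ 2 * bilap f x ^ 2
  set J0 := ∫ x, gw q R t x ^ 2 * lap (dd 0 f) x ^ 2
  set J1 := ∫ x, gw q R t x ^ 2 * lap (dd 1 f) x ^ 2
  set J2 := ∫ x, gw q R t x ^ 2 * lap (dd 2 f) x ^ 2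
  set K0 := ∫ x, gw q R t x ^ 2 * HH (dd 0 f) x
  set K1 := ∫ x, gw q R t x ^ 2 * HH (dd 1 f) x
  set K2 := ∫ x, gw q R t x ^ 2 * HH (dd 2 f) x
  clear_value I0 IG IH IL IGL IB J0 J1 J2 K0 K1 K2
  have K : K0 + K1 + K2 ≤ 217 * (t * e ^ 2) * IGL := by
    rw [← split2]; linarith
  have x1 : 0 ≤ 100 * t ^ 3 * e ^ 2 * r0 ^ 2 * IL := by positivity
  have x2 : 0 ≤ 8 * t * r0 * IGL := by positivity
  have x3 : 0 ≤ 100 * t ^ 3 * e ^ 2 * r0 ^ 2 * I0 := by positivity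
  have x4 : 0 ≤ 8 * t * r0 * IG := by positivity
  have y1 : IGL ≤ IB / (8 * t * r0) := by
    rw [le_div_iff₀ (by positivity)]; linarith
  have y2 : IL ≤ IB / (100 * t ^ 3 * e ^ 2 * r0 ^ 2) := by
    rw [le_div_iff₀ (by positivity)]; linarith
  have y2' : IL ≤ IB / (800 * (t * r0) ^ 2) := by
    refine y2.trans ?_
    refine div_le_div_of_nonneg_left p5 (by positivity) ?_
    have : 100 * t ^ 2 * r0 ^ 2 * 8 ≤ 100 * t ^ 2 * r0 ^ 2 * (t * e ^ 2) := by gcongr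
    nlinarith
  have y3 : IG ≤ IL / (8 * t * r0) := by
    rw [le_div_iff₀ (by positivity)]; linarith
  have y4 : I0 ≤ IL / (800 * (t * r0) ^ 2) := by
    rw [le_div_iff₀ (by positivity)]
    have : 100 * t ^ 2 * r0 ^ 2 * 8 ≤ 100 * t ^ 2 * r0 ^ 2 * (t * e ^ 2) := by gcongr
    have := mul_le_mul_of_nonneg_right this p1
    nlinarith
  have z1 : K0 + K1 + K2 ≤ 28 * e ^ 2 / r0 * IB := by
    calc K0 + K1 + K2 ≤ 217 * (t * e ^ 2) * (IB / (8 * t * r0)) := K.trans (by gcongr)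
      _ = (217 / 8) * (e ^ 2 / r0 * IB) := by field_simp
      _ ≤ 28 * (e ^ 2 / r0 * IB) := by gcongr; norm_num
      _ = _ := by ring
  have z2 : IH ≤ 3 / (t * r0) ^ 2 * IB := by
    calc IH ≤ 217 * (t * e ^ 2) * (IB / (100 * t ^ 3 * e ^ 2 * r0 ^ 2)) := B1.trans (by gcongr)
      _ = (217 / 100) * (1 / (t * r0) ^ 2 * IB) := by field_simp
      _ ≤ 3 * (1 / (t * r0) ^ 2 * IB) := by gcongr; norm_num
      _ = _ := by ring
  have z3 : IG ≤ 1 / (t * r0) ^ 3 * IB := by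
    calc IG ≤ (IB / (800 * (t * r0) ^ 2)) / (8 * t * r0) := y3.trans (by gcongr)
      _ = (1 / 6400) * (1 / (t * r0) ^ 3 * IB) := by field_simp; ring
      _ ≤ 1 * (1 / (t * r0) ^ 3 * IB) := by gcongr; norm_num
      _ = _ := by ring
  have z4 : I0 ≤ 1 / (t * r0) ^ 4 * IB := by
    calc I0 ≤ (IB / (800 * (t * r0) ^ 2)) / (800 * (t * r0) ^ 2) := y4.trans (by gcongr)
      _ = (1 / 640000) * (1 / (t * r0) ^ 4 * IB) := by field_simp; ring
      _ ≤ 1 * (1 / (t * r0) ^ 4 * IB) := by gcongr; norm_num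
      _ = _ := by ring
  linarith


/-- cutoff -/
def chi (q : E3) (r0 e : ℝ) : E3 → ℝ :=
  fun x => Real.smoothTransition ((sf q (r0 + 3 * e) x - e) / e)

lemma contDiff_chi (q : E3) (r0 e : ℝ) : ContDiff ℝ 4 (chi q r0 e) := by
  unfold chi
  have h : ContDiff ℝ 4 Real.smoothTransition := Real.smoothTransition.contDiff (n := 4)
  exact h.comp (((contDiff_sf q (r0 + 3 * e)).sub contDiff_const).div_const e)

lemma continuous_rho (q : E3) : Continuous (rho q) := (contDiff_rho q (n := 1)).continuous

lemma isClosed_Ann (q : E3) (r0 e : ℝ) : IsClosed (Ann q r0 e) :=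
  (isClosed_le continuous_const (continuous_rho q)).inter
    (isClosed_le (continuous_rho q) continuous_const)

lemma isCompact_Ann (q : E3) (r0 e : ℝ) : IsCompact (Ann q r0 e) := by
  refine Metric.isCompact_of_isClosed_isBounded (isClosed_Ann q r0 e) ?_
  refine Metric.isBounded_closedBall.subset (s := Ann q r0 e)
    (t := Metric.closedBall q (r0 + 2 * e + 1)) ?_
  intro x hx
  have := hx.2
  rw [rho_eq] at this
  rw [Metric.mem_closedBall]
  nlinarith [sq_nonneg (dist x q - 1)]

section cut
variable {Ω : Set E3} {u : E3 → ℝ} {q : E3} {r0 e : ℝ}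

lemma cut_support (he : 0 < e)
    (hz : ∀ x, rho q x < r0 → u x = 0) :
    Function.support (fun x => chi q r0 e x * u x) ⊆ Ann q r0 e := by
  intro x hx
  constructor
  · by_contra h
    push Not at h
    exact hx (by simp [hz x h])
  · by_contra h
    push Not at h
    apply hx
    have : chi q r0 e x = 0 := by
      unfold chi
      apply Real.smoothTransition.zero_of_nonpos
      apply div_nonpos_of_nonpos_of_nonneg _ he.le
      unfold sf; linarith
    simp [this]

lemma cut_tsupport (he : 0 < e)
    (hz : ∀ x, rho q x < r0 → u x = 0) :
    tsupport (fun x => chi q r0 e x * u x) ⊆ Ann q r0 e :=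
  closure_minimal (cut_support he hz) (isClosed_Ann q r0 e)

lemma cut_CK (hΩ : IsOpen Ω) (hu : ContDiffOn ℝ 4 u Ω) (he : 0 < e)
    (hsub : ∀ x, rho q x ≤ r0 + 2 * e → x ∈ Ω)
    (hz : ∀ x, rho q x < r0 → u x = 0) : CK 4 (fun x => chi q r0 e x * u x) := by
  constructor
  · rw [contDiff_iff_contDiffAt]
    intro x
    by_cases hx : rho q x ≤ r0 + 2 * e
    · have h1 : ContDiffAt ℝ 4 u x := hu.contDiffAt (hΩ.mem_nhds (hsub x hx))
      exact (contDiff_chi q r0 e).contDiffAt.mul h1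
    · have h0 : x ∉ tsupport (fun x => chi q r0 e x * u x) := fun h => hx (cut_tsupport he hz h).2
      exact (contDiffAt_const (c := (0:ℝ))).congr_of_eventuallyEq
        (notMem_tsupport_iff_eventuallyEq.mp h0)
  · exact HasCompactSupport.of_support_subset_isCompact (isCompact_Ann q r0 e) (cut_support he hz)

lemma cut_eq (he : 0 < e) {x : E3} (hx : rho q x < r0 + e) :
    (fun x => chi q r0 e x * u x) =ᶠ[nhds x] u := by
  have : ∀ᶠ y in nhds x, rho q y < r0 + e :=
    (continuous_rho q).continuousAt.eventually_lt continuousAt_const hx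
  filter_upwards [this] with y hy
  have : chi q r0 e y = 1 := by
    unfold chi
    apply Real.smoothTransition.one_of_one_le
    rw [le_div_iff₀ he]
    unfold sf; linarith
  simp [this]

end cut

lemma esum_nonneg (f : E3 → ℝ) (x : E3) : 0 ≤ esum f x := by
  unfold esum; positivity

lemma sq_le_esum (f : E3 → ℝ) (x : E3) : f x ^ 2 ≤ esum f x := by
  unfold esum
  have : 0 ≤ (∑ i, ∑ j, ∑ k, (pd3 f x i j k) ^ 2) + (∑ i, ∑ j, (pd2 f x i j) ^ 2)
    + (∑ i, (pd f x i) ^ 2) := by positivity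
  linarith

lemma CK_esum {f : E3 → ℝ} (hf : CK 4 f) : CK 0 (esum f) := by
  have hd : ∀ j, CK 3 (dd j f) := fun j => CK.d (n := 3) hf j
  have hd2 : ∀ i j, CK 2 (dd i (dd j f)) := fun i j => CK.d (n := 2) (hd j) i
  have hd3 : ∀ k i j, CK 1 (dd k (dd i (dd j f))) := fun k i j => CK.d (n := 1) (hd2 i j) k
  have h : CK 0 (fun x => (∑ i, ∑ j, ∑ k, (dd i (dd j (dd k f)) x) ^ 2)
    + (∑ i, ∑ j, (dd i (dd j f) x) ^ 2) + (∑ i, (dd i f x) ^ 2) + (f x) ^ 2) :=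
    (((CK.sum _ fun i => CK.sum _ fun j => CK.sum _ fun k =>
      ((hd3 i j k).of_le (by norm_num)).sq).add
      (CK.sum _ fun i => CK.sum _ fun j => ((hd2 i j).of_le (by norm_num)).sq)).add
      (CK.sum _ fun i => ((hd i).of_le (by norm_num)).sq)).add (hf.of_le (by norm_num)).sq
  exact h

lemma CK_bilap {f : E3 → ℝ} (hf : CK 4 f) : CK 0 (bilap f) := CK.l (n := 0) (CK.l (n := 2) hf)

lemma gw_sq (q : E3) (R t : ℝ) (x : E3) : gw q R t x ^ 2 = Real.exp (2 * t * sf q R x ^ 2) := by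
  unfold gw
  rw [← Real.exp_nat_mul]
  congr 1; push_cast; ring

lemma bilap_bound {Ω : Set E3} {u v : E3 → ℝ} {q : E3} {r0 e t C : ℝ} (ht : 0 < t)
    (he : 0 < e)
    (hsub : ∀ x, rho q x ≤ r0 + 2 * e → x ∈ Ω)
    (hb : ∀ x ∈ Ω, |bilap u x| ≤ C * Real.sqrt (esum u x + esum v x))
    (hz : ∀ x, rho q x < r0 → u x = 0) (x : E3) :
    gw q (r0 + 3 * e) t x ^ 2 * bilap (fun x => chi q r0 e x * u x) x ^ 2 ≤
      C ^ 2 * (gw q (r0 + 3 * e) t x ^ 2 * (esum (fun x => chi q r0 e x * u x) x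
        + esum (fun x => chi q r0 e x * v x) x))
      + Real.exp (8 * t * e ^ 2) * bilap (fun x => chi q r0 e x * u x) x ^ 2 := by
  set R := r0 + 3 * e with hR
  by_cases hx : rho q x < r0 + e
  · have hu' := cut_eq (u := u) he hx
    have hv' := cut_eq (u := v) he hx
    rw [bilap_congr hu', esum_congr hu', esum_congr hv']
    have h := hb x (hsub x (by linarith))
    have hs : 0 ≤ esum u x + esum v x := add_nonneg (esum_nonneg _ _) (esum_nonneg _ _)
    have h2 : bilap u x ^ 2 ≤ C ^ 2 * (esum u x + esum v x) := by
      have := pow_le_pow_left₀ (abs_nonneg _) h 2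
      rwa [sq_abs, mul_pow, Real.sq_sqrt hs] at this
    have h3 := mul_le_mul_of_nonneg_left h2 (sq_nonneg (gw q R t x))
    have h4 : 0 ≤ Real.exp (8 * t * e ^ 2) * bilap u x ^ 2 := by positivity
    linarith
  · push Not at hx
    have h0 : 0 ≤ C ^ 2 * (gw q R t x ^ 2 * (esum (fun x => chi q r0 e x * u x) x
        + esum (fun x => chi q r0 e x * v x) x)) :=
      mul_nonneg (sq_nonneg _) (mul_nonneg (sq_nonneg _)
        (add_nonneg (esum_nonneg _ _) (esum_nonneg _ _)))
    by_cases hx2 : x ∈ tsupport (fun x => chi q r0 e x * u x)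
    · have h1 := (cut_tsupport he hz hx2).2
      have h2 : gw q R t x ^ 2 ≤ Real.exp (8 * t * e ^ 2) := by
        rw [gw_sq]
        apply Real.exp_le_exp.mpr
        have hs1 : 0 ≤ sf q R x := by unfold sf; linarith
        have hs2 : sf q R x ≤ 2 * e := by unfold sf; linarith
        calc 2 * t * sf q R x ^ 2 ≤ 2 * t * (2 * e) ^ 2 := by gcongr
          _ = 8 * t * e ^ 2 := by ring
      have h3 := mul_le_mul_of_nonneg_right h2 (sq_nonneg (bilap (fun x => chi q r0 e x * u x) x))
      linarith
    · have hz' : bilap (fun x => chi q r0 e x * u x) x = 0 :=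
        eq_zero_of_not_tsupport fun h => hx2 (tsupport_lap _ (tsupport_lap _ h))
      rw [hz']
      simpa using h0

lemma fin_contra {κ I N T : ℝ} (hκ : 0 < κ) (hI : 0 < I) (hN : 0 ≤ N)
    (h : ∀ t, 0 ≤ t → T ≤ t → (1 + t * κ) * I ≤ N) : False := by
  have hf := h (max (max T 0) (N / (κ * I))) ((le_max_right _ _).trans (le_max_left _ _))
    ((le_max_left _ _).trans (le_max_left _ _))
  have h7 : N / (κ * I) ≤ max (max T 0) (N / (κ * I)) := le_max_right _ _
  generalize max (max T 0) (N / (κ * I)) = t at hf h7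
  rw [div_le_iff₀ (by positivity)] at h7
  nlinarith

set_option maxHeartbeats 1600000 in
lemma local_step {Ω : Set E3} (hΩ : IsOpen Ω) {u v : E3 → ℝ} (hu : ContDiffOn ℝ 4 u Ω)
    (hv : ContDiffOn ℝ 4 v Ω) {C : ℝ} (hC : 0 < C)
    (hbu : ∀ x ∈ Ω, |bilap u x| ≤ C * Real.sqrt (esum u x + esum v x))
    (hbv : ∀ x ∈ Ω, |bilap v x| ≤ C * Real.sqrt (esum u x + esum v x))
    {q : E3} {r0 η : ℝ} (hr0 : 0 < r0) (hη : 0 < η)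
    (hsub' : ∀ x, rho q x ≤ r0 + η → x ∈ Ω)
    (hzu : ∀ x, rho q x < r0 → u x = 0) (hzv : ∀ x, rho q x < r0 → v x = 0) :
    ∃ e, 0 < e ∧ e ≤ η ∧ ∀ x, rho q x < r0 + e → u x = 0 ∧ v x = 0 := by
  set δ : ℝ := 1 / (4 * C ^ 2) with hδ
  have hδ0 : 0 < δ := by positivity
  obtain ⟨e, he, e1, e2, e3', e4⟩ : ∃ e : ℝ, 0 < e ∧ e ≤ r0 / 100 ∧ e ≤ η / 2 ∧ e ≤ 1 ∧
      e ≤ δ * r0 / 56 :=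
    ⟨min (min (r0 / 100) (η / 2)) (min 1 (δ * r0 / 56)), by positivity,
      (min_le_left _ _).trans (min_le_left _ _), (min_le_left _ _).trans (min_le_right _ _),
      (min_le_right _ _).trans (min_le_left _ _), (min_le_right _ _).trans (min_le_right _ _)⟩
  have hsub : ∀ x, rho q x ≤ r0 + 2 * e → x ∈ Ω := fun x hx => hsub' x (by linarith)
  refine ⟨e, he, by linarith, ?_⟩
  set R := r0 + 3 * e with hR
  set U : E3 → ℝ := fun x => chi q r0 e x * u x with hU
  set V : E3 → ℝ := fun x => chi q r0 e x * v x with hV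
  have hUC : CK 4 U := cut_CK hΩ hu he hsub hzu
  have hVC : CK 4 V := cut_CK hΩ hv he hsub hzv
  have hUs : tsupport U ⊆ Ann q r0 e := cut_tsupport he hzu
  have hVs : tsupport V ⊆ Ann q r0 e := cut_tsupport he hzv
  have cm : ∀ (c : ℝ) {f : E3 → ℝ}, CK 0 f → CK 0 (fun x => c * f x) := fun c f hf =>
    CK.mul_left contDiff_const hf
  set M : ℝ := (∫ x, bilap U x ^ 2) + ∫ x, bilap V x ^ 2 with hM
  have hM0 : 0 ≤ M := add_nonneg (integral_nonneg fun x => sq_nonneg _)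
    (integral_nonneg fun x => sq_nonneg _)
  -- the main weighted bound
  have key : ∃ T : ℝ, ∀ t, T ≤ t →
      (∫ x, gw q R t x ^ 2 * (esum U x + esum V x)) ≤ 2 * δ * M * Real.exp (8 * t * e ^ 2) := by
    refine ⟨max (max (8 / e ^ 2) (1 / r0 ^ 2)) (max (1 / r0) (10 / δ / r0)), ?_⟩
    intro t hT
    have t1 : 8 / e ^ 2 ≤ t := ((le_max_left _ _).trans (le_max_left _ _)).trans hT
    have t2 : 1 / r0 ^ 2 ≤ t := ((le_max_right _ _).trans (le_max_left _ _)).trans hT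
    have t3 : 1 / r0 ≤ t := ((le_max_left _ _).trans (le_max_right _ _)).trans hT
    have t4 : 10 / δ / r0 ≤ t := ((le_max_right _ _).trans (le_max_right _ _)).trans hT
    have ht : 0 < t := lt_of_lt_of_le (by positivity) t3
    rw [div_le_iff₀ (by positivity)] at t1 t2 t3 t4
    rw [div_le_iff₀ (by positivity)] at t4
    have FU := full_estimate hUC hr0 he e1 t1 t2 hUs
    have FV := full_estimate hVC hr0 he e1 t1 t2 hVs
    rw [← hR] at FU FV
    have hD : 28 * e ^ 2 / r0 + 3 / (t * r0) ^ 2 + 1 / (t * r0) ^ 3 + 1 / (t * r0) ^ 4 ≤ δ := by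
      have a1 : 28 * e ^ 2 / r0 ≤ δ / 2 := by
        rw [div_le_iff₀ hr0]
        nlinarith
      set z := t * r0
      have hz : 0 < z := by linarith
      have a2 : 3 / z ^ 2 ≤ 3 / z := by
        apply div_le_div_of_nonneg_left (by norm_num) hz; nlinarith
      have a3 : 1 / z ^ 3 ≤ 1 / z := by
        apply div_le_div_of_nonneg_left (by norm_num) hz
        exact le_self_pow₀ t3 (by norm_num)
      have a4 : 1 / z ^ 4 ≤ 1 / z := by
        apply div_le_div_of_nonneg_left (by norm_num) hz
        exact le_self_pow₀ t3 (by norm_num)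
      have a5 : 5 / z ≤ δ / 2 := by
        rw [div_le_iff₀ hz]; nlinarith
      have a6 : 3 / z + 1 / z + 1 / z = 5 / z := by ring
      linarith
    have cEU : CK 0 (fun x => gw q R t x ^ 2 * esum U x) := CK_gw (CK_esum hUC)
    have cEV : CK 0 (fun x => gw q R t x ^ 2 * esum V x) := CK_gw (CK_esum hVC)
    have cBU : CK 0 (fun x => bilap U x ^ 2) := (CK_bilap hUC).sq
    have cBV : CK 0 (fun x => bilap V x ^ 2) := (CK_bilap hVC).sq
    have cE : CK 0 (fun x => gw q R t x ^ 2 * (esum U x + esum V x)) :=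
      CK_gw ((CK_esum hUC).add (CK_esum hVC))
    have hsplit : (∫ x, gw q R t x ^ 2 * (esum U x + esum V x)) =
        (∫ x, gw q R t x ^ 2 * esum U x) + ∫ x, gw q R t x ^ 2 * esum V x := by
      rw [← integral_add cEU.integrable cEV.integrable]
      congr 1; funext x; ring
    have BU : (∫ x, gw q R t x ^ 2 * bilap U x ^ 2) ≤
        C ^ 2 * (∫ x, gw q R t x ^ 2 * (esum U x + esum V x))
          + Real.exp (8 * t * e ^ 2) * ∫ x, bilap U x ^ 2 := by
      rw [← integral_const_mul, ← integral_const_mul,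
        ← integral_add (cm _ cE).integrable (cm _ cBU).integrable]
      exact integral_mono (CK_gw cBU).integrable ((cm _ cE).add (cm _ cBU)).integrable
        (fun x => bilap_bound ht he hsub hbu hzu x)
    have BV : (∫ x, gw q R t x ^ 2 * bilap V x ^ 2) ≤
        C ^ 2 * (∫ x, gw q R t x ^ 2 * (esum U x + esum V x))
          + Real.exp (8 * t * e ^ 2) * ∫ x, bilap V x ^ 2 := by
      rw [← integral_const_mul, ← integral_const_mul,
        ← integral_add (cm _ cE).integrable (cm _ cBV).integrable]
      refine integral_mono (CK_gw cBV).integrable ((cm _ cE).add (cm _ cBV)).integrable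
        (fun x => ?_)
      have := bilap_bound (u := v) (v := u) (C := C) ht he hsub
        (fun x hx => by rw [add_comm]; exact hbv x hx) hzv x
      rw [add_comm (esum (fun x => chi q r0 e x * v x) x)] at this
      exact this
    set IE := ∫ x, gw q R t x ^ 2 * (esum U x + esum V x)
    have pU : 0 ≤ ∫ x, gw q R t x ^ 2 * bilap U x ^ 2 := integral_nonneg fun x => by positivity
    have pV : 0 ≤ ∫ x, gw q R t x ^ 2 * bilap V x ^ 2 := integral_nonneg fun x => by positivity
    have g1 := FU.trans (mul_le_mul_of_nonneg_right hD pU)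
    have g2 := FV.trans (mul_le_mul_of_nonneg_right hD pV)
    have g3 : IE ≤ δ * (2 * C ^ 2 * IE + Real.exp (8 * t * e ^ 2) * M) := by
      rw [hsplit, hM]
      have := mul_le_mul_of_nonneg_left (add_le_add BU BV) hδ0.le
      rw [hsplit] at this
      linarith
    have g4 : δ * (2 * C ^ 2 * IE) = IE / 2 := by
      rw [hδ]; field_simp; norm_num
    linarith
  obtain ⟨T, hT⟩ := key
  -- conclusion
  intro x0 hx0
  by_contra hcon
  have hUx : U x0 = u x0 := (cut_eq (u := u) he hx0).eq_of_nhds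
  have hVx : V x0 = v x0 := (cut_eq (u := v) he hx0).eq_of_nhds
  have hpos : 0 < U x0 ^ 2 + V x0 ^ 2 := by
    rw [hUx, hVx]
    by_contra h
    apply hcon
    constructor <;> nlinarith [sq_nonneg (u x0), sq_nonneg (v x0)]
  have hs0 : 2 * e < sf q R x0 := by unfold sf; linarith
  set s1 := (sf q R x0 + 2 * e) / 2 with hs1
  have hs1a : 2 * e < s1 := by linarith
  have hs1b : s1 < sf q R x0 := by linarith
  set ψ : E3 → ℝ := fun x => max (sf q R x - s1) 0 * (U x ^ 2 + V x ^ 2) with hψ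
  have hUV : CK 0 (fun x => U x ^ 2 + V x ^ 2) :=
    (hUC.of_le (by norm_num)).sq.add (hVC.of_le (by norm_num)).sq
  have hψc : Continuous ψ :=
    (((contDiff_sf q R (n := 1)).continuous.sub continuous_const).max continuous_const).mul
      hUV.1.continuous
  have hψs : HasCompactSupport ψ := hUV.2.mul_left
  have hψ0 : 0 ≤ ψ := fun x => by
    simp only [hψ, Pi.zero_apply]; positivity
  have hψx : ψ x0 ≠ 0 := by
    apply ne_of_gt
    simp only [hψ]
    apply mul_pos _ hpos
    exact lt_max_of_lt_left (by linarith)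
  have hI : 0 < ∫ x, ψ x :=
    hψc.integral_pos_of_hasCompactSupport_nonneg_nonzero hψs hψ0 hψx
  have lower : ∀ t, 0 ≤ t → Real.exp (2 * t * s1 ^ 2) * (∫ x, ψ x) ≤
      3 * e * ∫ x, gw q R t x ^ 2 * (esum U x + esum V x) := by
    intro t ht
    rw [← integral_const_mul, ← integral_const_mul]
    refine integral_mono ((hψc.integrable_of_hasCompactSupport hψs).const_mul _)
      ((CK_gw ((CK_esum hUC).add (CK_esum hVC))).integrable.const_mul _) ?_
    intro x
    simp only [hψ]
    have hE : U x ^ 2 + V x ^ 2 ≤ esum U x + esum V x :=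
      add_le_add (sq_le_esum _ _) (sq_le_esum _ _)
    have hE0 : 0 ≤ esum U x + esum V x := add_nonneg (esum_nonneg _ _) (esum_nonneg _ _)
    have hR0 : 0 ≤ 3 * e * (gw q R t x ^ 2 * (esum U x + esum V x)) :=
      mul_nonneg (by positivity) (mul_nonneg (sq_nonneg _) hE0)
    by_cases h1 : sf q R x ≤ s1
    · rw [max_eq_right (by linarith)]
      simpa using hR0
    · push Not at h1
      by_cases h2 : rho q x < r0
      · have : U x = 0 := by simp [hU, hzu x h2]
        have h' : V x = 0 := by simp [hV, hzv x h2]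
        simpa [this, h'] using hR0
      · push Not at h2
        have hs3 : sf q R x ≤ 3 * e := by unfold sf; linarith
        rw [max_eq_left (by linarith), gw_sq]
        have hA : Real.exp (2 * t * s1 ^ 2) ≤ Real.exp (2 * t * sf q R x ^ 2) := by
          apply Real.exp_le_exp.mpr
          have : 0 ≤ s1 := by linarith
          gcongr
        have hB : (sf q R x - s1) * (U x ^ 2 + V x ^ 2) ≤ 3 * e * (esum U x + esum V x) := by
          apply mul_le_mul _ hE (by positivity) (by positivity)
          linarith
        have hB0 : 0 ≤ (sf q R x - s1) * (U x ^ 2 + V x ^ 2) :=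
          mul_nonneg (by linarith) (by positivity)
        have := mul_le_mul hA hB hB0 (Real.exp_pos _).le
        linarith
  set I := ∫ x, ψ x with hIdef
  set κ := 2 * (s1 ^ 2 - 4 * e ^ 2) with hκ
  have hκ0 : 0 < κ := by rw [hκ]; nlinarith
  have fin : ∀ t, 0 ≤ t → T ≤ t → (1 + t * κ) * I ≤ 6 * e * δ * M := by
    intro t ht0 ht
    have h1 := lower t ht0
    have h2 := mul_le_mul_of_nonneg_left (hT t ht) (show 0 ≤ 3 * e by positivity)
    have h3 := h1.trans h2
    have h4 : Real.exp (2 * t * s1 ^ 2) = Real.exp (t * κ) * Real.exp (8 * t * e ^ 2) := by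
      rw [← Real.exp_add]; congr 1; rw [hκ]; ring
    rw [h4] at h3
    have h5 : Real.exp (t * κ) * I ≤ 6 * e * δ * M := by
      have hp := Real.exp_pos (8 * t * e ^ 2)
      refine le_of_mul_le_mul_right ?_ hp
      linarith
    have h6 := Real.add_one_le_exp (t * κ)
    have := mul_le_mul_of_nonneg_right h6 hI.le
    linarith
  have hN : 0 ≤ 6 * e * δ * M := by positivity
  exact fin_contra hκ0 hI hN fin

/-- Unique continuation for a coupled fourth-order elliptic system: if `u, v ∈ C⁴(U)`
on an open connected `U ⊆ ℝ³` satisfy `|Δ²u| ≤ C (e(u)+e(v))^{1/2}` and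
`|Δ²v| ≤ C (e(u)+e(v))^{1/2}` pointwise on `U`, and `u, v` vanish on a nonempty open
subset of `U`, then `u = v = 0` on `U`. -/
theorem unique_continuation_coupled_bilaplacian
    (U : Set (EuclideanSpace ℝ (Fin 3))) (hUopen : IsOpen U) (hUconn : IsConnected U)
    (u v : EuclideanSpace ℝ (Fin 3) → ℝ)
    (hu : ContDiffOn ℝ 4 u U) (hv : ContDiffOn ℝ 4 v U)
    (C : ℝ) (hC : 0 < C)
    (hbu : ∀ x ∈ U, |bilap u x| ≤ C * Real.sqrt (esum u x + esum v x))
    (hbv : ∀ x ∈ U, |bilap v x| ≤ C * Real.sqrt (esum u x + esum v x))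
    (V : Set (EuclideanSpace ℝ (Fin 3))) (hVopen : IsOpen V) (hVne : V.Nonempty)
    (hVU : V ⊆ U)
    (huV : ∀ x ∈ V, u x = 0) (hvV : ∀ x ∈ V, v x = 0) :
    ∀ x ∈ U, u x = 0 ∧ v x = 0 := by
  set Z : Set E3 := interior {x | x ∈ U ∧ u x = 0 ∧ v x = 0} with hZ
  have hZo : IsOpen Z := isOpen_interior
  have hZs : ∀ x ∈ Z, x ∈ U ∧ u x = 0 ∧ v x = 0 := by
    intro x hx
    have h : x ∈ {x | x ∈ U ∧ u x = 0 ∧ v x = 0} := interior_subset hx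
    exact h
  have hVZ : V ⊆ Z := interior_maximal (fun x hx => ⟨hVU hx, huV x hx, hvV x hx⟩) hVopen
  have hne : (U ∩ Z).Nonempty := by
    obtain ⟨x, hx⟩ := hVne
    exact ⟨x, hVU hx, hVZ hx⟩
  suffices hsub : U ⊆ Z from fun x hx => (hZs x (hsub hx)).2
  refine hUconn.isPreconnected.subset_of_closure_inter_subset hZo hne ?_
  rintro p ⟨hpc, hpU⟩
  by_contra hpZ
  obtain ⟨d, hd, hball⟩ := Metric.isOpen_iff.mp hUopen p hpU
  obtain ⟨q, hqZ, hpq⟩ := Metric.mem_closure_iff.mp hpc (d / 4) (by positivity)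
  have hcl : IsClosed Zᶜ := hZo.isClosed_compl
  have hcne : (Zᶜ).Nonempty := ⟨p, hpZ⟩
  obtain ⟨r, hr⟩ : ∃ r, r = Metric.infDist q Zᶜ := ⟨_, rfl⟩
  have hr0 : 0 < r := by
    rw [hr]
    exact (hcl.notMem_iff_infDist_pos hcne).mp (fun h => h hqZ)
  have hrd : r < d / 4 := by
    rw [hr]
    refine lt_of_le_of_lt (Metric.infDist_le_dist_of_mem (show p ∈ Zᶜ from hpZ)) ?_
    rwa [dist_comm]
  have hin : ∀ x, rho q x < r ^ 2 → x ∈ Z := by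
    intro x hx
    rw [rho_eq] at hx
    have h1 : dist x q < r := lt_of_pow_lt_pow_left₀ 2 hr0.le hx
    by_contra hxZ
    have h2 := Metric.infDist_le_dist_of_mem (x := q) (show x ∈ Zᶜ from hxZ)
    rw [← hr, dist_comm] at h2
    linarith
  have hbig : ∀ x, rho q x ≤ r ^ 2 + ((d / 2) ^ 2 - r ^ 2) → x ∈ U := by
    intro x hx
    rw [rho_eq] at hx
    have h1 : dist x q ≤ d / 2 := by
      refine (sq_le_sq₀ dist_nonneg (by positivity)).mp ?_
      linarith
    apply hball
    rw [Metric.mem_ball]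
    have h2 := dist_triangle x q p
    rw [dist_comm q p] at h2
    linarith
  obtain ⟨e, he, heη, hz⟩ := local_step hUopen hu hv hC hbu hbv (q := q) (r0 := r ^ 2)
    (η := (d / 2) ^ 2 - r ^ 2) (by positivity) (by nlinarith) hbig
    (fun x hx => (hZs x (hin x hx)).2.1) (fun x hx => (hZs x (hin x hx)).2.2)
  have hBZ : Metric.ball q (Real.sqrt (r ^ 2 + e)) ⊆ Z := by
    refine interior_maximal ?_ Metric.isOpen_ball
    intro x hx
    rw [Metric.mem_ball] at hx
    have h1 : rho q x < r ^ 2 + e := by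
      rw [rho_eq]
      exact (Real.lt_sqrt dist_nonneg).mp hx
    exact ⟨hbig x (by linarith), hz x h1⟩
  have h3 : Real.sqrt (r ^ 2 + e) ≤ r := by
    rw [hr]
    refine (Metric.le_infDist hcne).mpr ?_
    intro y hy
    by_contra hlt
    push Not at hlt
    apply hy
    apply hBZ
    rw [Metric.mem_ball, dist_comm]
    rwa [← hr] at hlt
  have h4 : r < Real.sqrt (r ^ 2 + e) := by
    apply Real.lt_sqrt_of_sq_lt
    linarith
  linarith
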